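/- There is an absolute constant C > 0 with the following property (a number-field generalization of Gallagher's lemma). Let F be a number field with ring of integers O_F, let T ≥ 1 be real, and let c be a complex-valued function on the nonzero integral ideals of O_F such that ∑_𝔫 |c(𝔫)| < ∞. Then ∫_{-T}^{T} | ∑_𝔫 c(𝔫) · (N𝔫)^{-it} |² dt ≤ C · T² · ∫_0^∞ | ∑_{𝔫 : x < N𝔫 ≤ x·e^{1/T}} c(𝔫) |² dx/x, where the outer sums run over all nonzero integral ideals of O_F. -/

import Mathlib

open scoped NumberField

/-!
Superpose translates of a pulse `φ` at the frequencies `λᵢ` with weights `cᵢ`: the Fourier transform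
of `u ↦ ∑ᵢ cᵢ φ(u - λᵢ)` is `φ̂(ξ) ∑ᵢ cᵢ e(-λᵢ ξ)`. For `φ` the indicator of `[-1/T, 0)`,
`|φ̂(ξ)| ≥ 1/(2T)` as long as `|2πξ| ≤ T`, so Plancherel bounds the mean square of the exponential
sum over `|2πξ| ≤ T` by that of the superposition, whose value at `u` is the sum of the `cᵢ` with
`u < λᵢ ≤ u + 1/T`. Gallagher's lemma is the case `λᵢ = log Nᵢ`, with `x = eᵘ`.
-/

open MeasureTheory FourierTransform
open scoped ENNReal RealInnerProductSpace

theorem Lp_two_norm_sq_eq_integral {α E : Type*} [MeasurableSpace α] {μ : Measure α}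
    [NormedAddCommGroup E] (f : Lp E 2 μ) : ‖f‖ ^ 2 = ∫ x, ‖f x‖ ^ 2 ∂μ := by
  have hnonneg : 0 ≤ ∫ x, ‖f x‖ ^ 2 ∂μ := integral_nonneg fun _ => sq_nonneg _
  simp [Lp.norm_def, toReal_eLpNorm (Lp.aestronglyMeasurable f), ← Real.rpow_mul_natCast hnonneg,
    lpNorm_eq_integral_norm_rpow_toReal two_ne_zero ENNReal.ofNat_ne_top
      (Lp.aestronglyMeasurable f)]

section Plancherel

variable {V E : Type*} [NormedAddCommGroup V] [InnerProductSpace ℝ V] [FiniteDimensional ℝ V]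
  [MeasurableSpace V] [BorelSpace V] [NormedAddCommGroup E] [InnerProductSpace ℂ E]
  [CompleteSpace E] {f : V → E}

theorem fourier_toLp_ae_eq (hf₁ : Integrable f) (hf₂ : MemLp f 2) :
    (𝓕 (hf₂.toLp f) : Lp E 2 (volume : Measure V)) =ᵐ[volume] 𝓕 f := by
  have hcont : Continuous (𝓕 f) := VectorFourier.fourierIntegral_continuous
    Real.continuous_fourierChar (innerSL ℝ).continuous₂ hf₁
  refine ae_eq_of_integral_contDiff_smul_eq ((Lp.memLp _).locallyIntegrable one_le_two)
    hcont.locallyIntegrable fun g hg hgs => ?_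
  have hgs' : HasCompactSupport (fun x => (g x : ℂ)) :=
    hgs.comp_left (g := fun x : ℝ => (x : ℂ)) Complex.ofReal_zero
  let G : SchwartzMap V ℂ := hgs'.toSchwartzMap (Complex.ofRealCLM.contDiff.comp hg)
  have hG (x : V) (e : E) : g x • e = G x • e := (Complex.coe_smul (g x) e).symm
  simp only [hG]
  calc ∫ x, G x • (𝓕 (hf₂.toLp f) : Lp E 2 (volume : Measure V)) x
      = ∫ x, 𝓕 G x • hf₂.toLp f x := by
        simpa only [TemperedDistribution.fourier_apply, Lp.toTemperedDistribution_apply] using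
          congrArg (fun D => D G) (Lp.fourier_toTemperedDistribution_eq (hf₂.toLp f)).symm
    _ = ∫ x, 𝓕 G x • f x := integral_congr_ae <| by
        filter_upwards [hf₂.coeFn_toLp] with x hx using by rw [hx]
    _ = ∫ x, G x • 𝓕 f x := by
        simpa using! VectorFourier.integral_fourierIntegral_smul_eq_flip (L := innerₗ V)
          Real.continuous_fourierChar continuous_inner G.integrable hf₁

theorem memLp_two_fourier (hf₁ : Integrable f) (hf₂ : MemLp f 2) : MemLp (𝓕 f) 2 :=
  (memLp_congr_ae (fourier_toLp_ae_eq hf₁ hf₂)).1 (Lp.memLp _)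

theorem integral_norm_sq_fourier (hf₁ : Integrable f) (hf₂ : MemLp f 2) :
    ∫ ξ, ‖𝓕 f ξ‖ ^ 2 = ∫ x, ‖f x‖ ^ 2 := by
  calc ∫ ξ, ‖𝓕 f ξ‖ ^ 2
      = ∫ ξ, ‖(𝓕 (hf₂.toLp f) : Lp E 2 (volume : Measure V)) ξ‖ ^ 2 := integral_congr_ae <| by
        filter_upwards [fourier_toLp_ae_eq hf₁ hf₂] with ξ hξ using by rw [hξ]
    _ = ∫ x, ‖hf₂.toLp f x‖ ^ 2 := by
        rw [← Lp_two_norm_sq_eq_integral, ← Lp_two_norm_sq_eq_integral, Lp.norm_fourier_eq]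
    _ = ∫ x, ‖f x‖ ^ 2 := integral_congr_ae <| by
        filter_upwards [hf₂.coeFn_toLp] with x hx using by rw [hx]

end Plancherel

theorem memLp_tsum {α ι E : Type*} [MeasurableSpace α] {μ : Measure α} [Countable ι]
    [NormedAddCommGroup E] [CompleteSpace E] {p : ℝ≥0∞} (hp : 1 ≤ p) {f : ι → α → E}
    (hf : ∀ i, AEStronglyMeasurable (f i) μ) (hsum : ∑' i, eLpNorm (f i) p μ ≠ ⊤) :
    MemLp (fun x => ∑' i, f i x) p μ := by
  have : Fact (1 ≤ p) := ⟨hp⟩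
  have hLp (i : ι) : MemLp (f i) p μ := ⟨hf i, (ENNReal.ne_top_of_tsum_ne_top hsum i).lt_top⟩
  have hsum' : ∑' i, ‖(hLp i).toLp (f i)‖ₑ ≠ ⊤ := by simpa only [Lp.enorm_toLp] using hsum
  refine (memLp_congr_ae ?_).1 (Lp.memLp (∑' i, (hLp i).toLp (f i)))
  filter_upwards [Lp.coeFn_tsum hsum', ae_all_iff.2 fun i => (hLp i).coeFn_toLp] with x hx hfx
  simp only [hx, hfx]

section Fourier

variable {ι V E : Type*} [NormedAddCommGroup V] [InnerProductSpace ℝ V] [FiniteDimensional ℝ V]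
  [MeasurableSpace V] [BorelSpace V] [NormedAddCommGroup E] [NormedSpace ℂ E]

theorem fourier_tsum [Countable ι] {f : ι → V → E} (hf : ∀ i, Integrable (f i))
    (hsum : Summable fun i => ∫ v, ‖f i v‖) (ξ : V) :
    𝓕 (fun v => ∑' i, f i v) ξ = ∑' i, 𝓕 (f i) ξ := by
  have hint (i : ι) : Integrable fun v => 𝐞 (-⟪v, ξ⟫) • f i v :=
    (Real.fourierIntegral_convergent_iff ξ).2 (hf i)
  simp only [Real.fourier_eq]
  rw [integral_tsum_of_summable_integral_norm hint (by simpa only [Circle.norm_smul] using hsum)]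
  exact integral_congr_ae (.of_forall fun v => (tsum_const_smul' _).symm)

theorem fourier_comp_sub_right (f : V → E) (a ξ : V) :
    𝓕 (fun v => f (v - a)) ξ = 𝐞 (-⟪a, ξ⟫) • 𝓕 f ξ := by
  simpa [sub_eq_add_neg] using! congrFun
    (VectorFourier.fourierIntegral_comp_add_right Real.fourierChar volume (innerₗ V) f (-a)) ξ

theorem fourier_smul_const [CompleteSpace E] (φ : V → ℂ) (e : E) (ξ : V) :
    𝓕 (fun v => φ v • e) ξ = 𝓕 φ ξ • e := by
  simp only [Real.fourier_eq, ← integral_smul_const, smul_assoc]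

end Fourier

section TranslateSum

variable {ι V E : Type*} [AddCommMonoid E] [Module ℂ E] [TopologicalSpace E]

/-- The superposition `∑ᵢ φ(v - λᵢ) cᵢ` of translates of a pulse `φ`, with value `0` where the sum
does not converge. Its Fourier transform is the exponential sum with frequencies `λᵢ` and
coefficients `cᵢ`, weighted by the Fourier transform of `φ`. -/
noncomputable def translateSum [Sub V] (φ : V → ℂ) (l : ι → V) (c : ι → E) (v : V) : E :=
  ∑' i, φ (v - l i) • c i

theorem translateSum_support [Sub V] (φ : V → ℂ) (l : ι → V) (c : ι → E) :
    translateSum φ (fun i : Function.support c => l i) (fun i => c i) = translateSum φ l c := by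
  ext v
  exact tsum_subtype_eq_of_support_subset (f := fun i => φ (v - l i) • c i)
    (Function.support_smul_subset_right _ _)

variable [SeminormedAddCommGroup V] [InnerProductSpace ℝ V]

/-- The exponential sum `∑ᵢ cᵢ e(-⟪λᵢ, ξ⟫)`, where `e(x) = exp(2πix)`, with value `0` where it does
not converge. For `λᵢ = log Nᵢ` and `ξ = t / 2π` it is the Dirichlet series `∑ᵢ cᵢ Nᵢ^(-it)`. -/
noncomputable def expSum (l : ι → V) (c : ι → E) (ξ : V) : E :=
  ∑' i, 𝐞 (-⟪l i, ξ⟫) • c i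

theorem expSum_support (l : ι → V) (c : ι → E) :
    expSum (fun i : Function.support c => l i) (fun i => c i) = expSum l c := by
  ext ξ
  exact tsum_subtype_eq_of_support_subset (f := fun i => 𝐞 (-⟪l i, ξ⟫) • c i)
    (Function.support_smul_subset_right _ _)

end TranslateSum

section FourierTranslateSum

variable {ι V E : Type*} [NormedAddCommGroup V] [InnerProductSpace ℝ V] [FiniteDimensional ℝ V]
  [MeasurableSpace V] [BorelSpace V] [NormedAddCommGroup E] [NormedSpace ℂ E] [CompleteSpace E]
  {φ : V → ℂ} {l : ι → V} {c : ι → E}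

theorem memLp_translateSum [Countable ι] {p : ℝ≥0∞} (hp : 1 ≤ p) (hφ : MemLp φ p)
    (hc : Summable fun i => ‖c i‖) : MemLp (translateSum φ l c) p := by
  have hmp (i : ι) := measurePreserving_sub_right (volume : Measure V) (l i)
  have hle (i : ι) : eLpNorm (fun v => φ (v - l i) • c i) p ≤ ‖c i‖ₑ * eLpNorm φ p := by
    rw [← eLpNorm_comp_measurePreserving hφ.1 (hmp i), ← ofReal_norm]
    exact eLpNorm_le_mul_eLpNorm_of_ae_le_mul
      (.of_forall fun v => by rw [norm_smul, mul_comm]; rfl) p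
  refine memLp_tsum hp (fun i => (hφ.1.comp_measurePreserving (hmp i)).smul_const (c i)) ?_
  refine ne_top_of_le_ne_top ?_ (ENNReal.tsum_le_tsum hle)
  rw [ENNReal.tsum_mul_right]
  exact ENNReal.mul_ne_top (tsum_enorm_ne_top_iff_summable_norm.2 hc) hφ.2.ne

theorem fourier_translateSum [Countable ι] (hφ : Integrable φ) (hc : Summable fun i => ‖c i‖)
    (ξ : V) : 𝓕 (translateSum φ l c) ξ = 𝓕 φ ξ • expSum l c ξ := by
  have hnorm (i : ι) : ∫ v, ‖φ (v - l i) • c i‖ = (∫ v, ‖φ v‖) * ‖c i‖ := by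
    simp only [norm_smul, integral_mul_const, integral_sub_right_eq_self (fun v => ‖φ v‖)]
  calc 𝓕 (translateSum φ l c) ξ = ∑' i, 𝓕 (fun v => φ (v - l i) • c i) ξ :=
        fourier_tsum (fun i => (hφ.comp_sub_right (l i)).smul_const (c i))
          (by simpa only [hnorm] using hc.mul_left _) ξ
    _ = ∑' i, 𝓕 φ ξ • 𝐞 (-⟪l i, ξ⟫) • c i := tsum_congr fun i => by
        rw [fourier_smul_const, fourier_comp_sub_right, smul_assoc, smul_comm]
    _ = 𝓕 φ ξ • expSum l c ξ := tsum_const_smul'' _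

end FourierTranslateSum

theorem sq_mul_setIntegral_norm_sq_expSum_le {ι V E : Type*} [NormedAddCommGroup V]
    [InnerProductSpace ℝ V] [FiniteDimensional ℝ V] [MeasurableSpace V] [BorelSpace V]
    [NormedAddCommGroup E] [InnerProductSpace ℂ E] [CompleteSpace E]
    {φ : V → ℂ} (hφ₁ : Integrable φ) (hφ₂ : MemLp φ 2) (l : ι → V) {c : ι → E}
    (hc : Summable fun i => ‖c i‖) {S : Set V} (hS : MeasurableSet S) {δ : ℝ} (hδ : 0 ≤ δ)
    (hφS : ∀ ξ ∈ S, δ ≤ ‖𝓕 φ ξ‖) :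
    δ ^ 2 * ∫ ξ in S, ‖expSum l c ξ‖ ^ 2 ≤ ∫ v, ‖translateSum φ l c v‖ ^ 2 := by
  have : Countable (Function.support c) := by
    simpa only [Function.support, norm_ne_zero_iff] using hc.countable_support.to_subtype
  rw [← expSum_support, ← translateSum_support]
  set l' := fun i : Function.support c => l i
  set c' := fun i : Function.support c => c i
  have hc' : Summable fun i => ‖c' i‖ := hc.subtype _
  have hΦ₁ : Integrable (translateSum φ l' c') :=
    memLp_one_iff_integrable.1 (memLp_translateSum le_rfl (memLp_one_iff_integrable.2 hφ₁) hc')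
  have hΦ₂ : MemLp (translateSum φ l' c') 2 := memLp_translateSum one_le_two hφ₂ hc'
  have hint : Integrable fun ξ => ‖𝓕 (translateSum φ l' c') ξ‖ ^ 2 :=
    (memLp_two_fourier hΦ₁ hΦ₂).norm.integrable_sq
  have hle : ∀ ξ ∈ S, δ ^ 2 * ‖expSum l' c' ξ‖ ^ 2 ≤ ‖𝓕 (translateSum φ l' c') ξ‖ ^ 2 := by
    intro ξ hξ
    rw [fourier_translateSum hφ₁ hc', norm_smul, mul_pow]
    gcongr
    exact hφS ξ hξ
  calc δ ^ 2 * ∫ ξ in S, ‖expSum l' c' ξ‖ ^ 2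
      = ∫ ξ in S, δ ^ 2 * ‖expSum l' c' ξ‖ ^ 2 := (integral_const_mul _ _).symm
    _ ≤ ∫ ξ in S, ‖𝓕 (translateSum φ l' c') ξ‖ ^ 2 :=
        integral_mono_of_nonneg (.of_forall fun _ => by positivity) hint.integrableOn
          (ae_restrict_of_forall_mem hS hle)
    _ ≤ ∫ ξ, ‖𝓕 (translateSum φ l' c') ξ‖ ^ 2 :=
        setIntegral_le_integral hint (.of_forall fun _ => by positivity)
    _ = ∫ v, ‖translateSum φ l' c' v‖ ^ 2 := integral_norm_sq_fourier hΦ₁ hΦ₂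

theorem half_measureReal_le_norm_fourier_indicator {V : Type*} [NormedAddCommGroup V]
    [InnerProductSpace ℝ V] [FiniteDimensional ℝ V] [MeasurableSpace V] [BorelSpace V]
    {S : Set V} (hS : MeasurableSet S) (hS_fin : volume S ≠ ⊤) {ξ : V}
    (hξ : ∀ v ∈ S, |2 * Real.pi * ⟪v, ξ⟫| ≤ 1) :
    volume.real S / 2 ≤ ‖𝓕 (S.indicator (1 : V → ℂ)) ξ‖ := by
  have hfourier : 𝓕 (S.indicator (1 : V → ℂ)) ξ = ∫ v in S, (𝐞 (-⟪v, ξ⟫) : ℂ) := by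
    rw [Real.fourier_eq, ← integral_indicator hS]
    congr 1 with v
    by_cases hv : v ∈ S <;> simp [hv, Circle.smul_def]
  have hint : IntegrableOn (fun v => (𝐞 (-⟪v, ξ⟫) : ℂ)) S :=
    Measure.integrableOn_of_bounded hS_fin (by fun_prop)
      (.of_forall fun v => (Circle.norm_coe _).le)
  have hre : ∀ v ∈ S, 1 / 2 ≤ (𝐞 (-⟪v, ξ⟫) : ℂ).re := fun v hv => by
    have hcos := Real.one_sub_sq_div_two_le_cos (x := 2 * Real.pi * ⟪v, ξ⟫)
    have hsq : (2 * Real.pi * ⟪v, ξ⟫) ^ 2 ≤ 1 := (sq_le_one_iff_abs_le_one _).2 (hξ v hv)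
    rw [Real.fourierChar_apply, Complex.exp_ofReal_mul_I_re, mul_neg, Real.cos_neg]
    linarith
  calc volume.real S / 2 = ∫ v in S, (1 / 2 : ℝ) := by
        rw [setIntegral_const, smul_eq_mul, mul_one_div]
    _ ≤ ∫ v in S, (𝐞 (-⟪v, ξ⟫) : ℂ).re :=
        setIntegral_mono_on (integrableOn_const hS_fin) hint.re hS hre
    _ = (∫ v in S, (𝐞 (-⟪v, ξ⟫) : ℂ)).re := integral_re hint
    _ ≤ ‖𝓕 (S.indicator (1 : V → ℂ)) ξ‖ := hfourier ▸ Complex.re_le_norm _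

theorem inv_two_mul_le_norm_fourier_indicator_Ico {T : ℝ} (hT : 0 < T) {ξ : ℝ}
    (hξ : |2 * Real.pi * ξ| ≤ T) :
    1 / (2 * T) ≤ ‖𝓕 ((Set.Ico (-(1 / T)) 0).indicator (1 : ℝ → ℂ)) ξ‖ := by
  have hvol : 1 / (2 * T) = volume.real (Set.Ico (-(1 / T)) 0) / 2 := by
    rw [Real.volume_real_Ico_of_le (by simp [hT.le])]
    ring
  rw [hvol]
  refine half_measureReal_le_norm_fourier_indicator measurableSet_Ico measure_Ico_lt_top.ne
    fun v hv => ?_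
  have hv' : |v| ≤ 1 / T := abs_le.2 ⟨hv.1, hv.2.le.trans (by positivity)⟩
  calc |2 * Real.pi * ⟪v, ξ⟫| = |2 * Real.pi * ξ| * |v| := by
        rw [← abs_mul, mul_assoc (2 * Real.pi)]
        rfl
    _ ≤ T * (1 / T) := by gcongr
    _ = 1 := mul_one_div_cancel hT.ne'

theorem integral_Ioi_div_eq_integral_comp_exp (g : ℝ → ℝ) :
    ∫ x in Set.Ioi 0, g x / x = ∫ u, g (Real.exp u) := by
  have hsubst := integral_image_eq_integral_abs_deriv_smul MeasurableSet.univ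
    (fun u _ => (Real.hasDerivAt_exp u).hasDerivWithinAt) Real.exp_injective.injOn
    (fun x => g x / x)
  simpa [Set.image_univ, mul_div_cancel₀] using hsubst

section Logarithm

variable {ι E : Type*} [NormedAddCommGroup E] [NormedSpace ℂ E] {N : ι → ℝ} {c : ι → E}

theorem expSum_log (hN : ∀ i, c i ≠ 0 → 0 < N i) (t : ℝ) :
    expSum (fun i => Real.log (N i)) c (t / (2 * Real.pi)) =
      ∑' i, (N i : ℂ) ^ (-(t : ℂ) * Complex.I) • c i := by
  refine tsum_congr fun i => ?_
  by_cases hi : c i = 0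
  · simp [hi]
  have hNi : (N i : ℂ) ≠ 0 := Complex.ofReal_ne_zero.2 (hN i hi).ne'
  have hphase : 2 * Real.pi * -⟪Real.log (N i), t / (2 * Real.pi)⟫ = Real.log (N i) * -t := by
    rw [show ⟪Real.log (N i), t / (2 * Real.pi)⟫ = Real.log (N i) * (t / (2 * Real.pi)) from
      mul_comm _ _]
    field_simp
  rw [Circle.smul_def, Real.fourierChar_apply, hphase, Complex.cpow_def_of_ne_zero hNi,
    ← Complex.ofReal_log (hN i hi).le, Complex.ofReal_mul, Complex.ofReal_neg, mul_assoc]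

theorem translateSum_indicator_Ico_log (hN : ∀ i, c i ≠ 0 → 0 < N i) (h u : ℝ) :
    translateSum ((Set.Ico (-h) 0).indicator 1) (fun i => Real.log (N i)) c u =
      ∑' i : {i // Real.exp u < N i ∧ N i ≤ Real.exp u * Real.exp h}, c i := by
  rw [show ∑' i : {i // Real.exp u < N i ∧ N i ≤ Real.exp u * Real.exp h}, c i = _ from
    tsum_subtype {i | Real.exp u < N i ∧ N i ≤ Real.exp u * Real.exp h} c]
  refine tsum_congr fun i => ?_
  by_cases hi : c i = 0
  · simp [hi, Set.indicator]
  have hmem : u - Real.log (N i) ∈ Set.Ico (-h) 0 ↔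
      Real.exp u < N i ∧ N i ≤ Real.exp u * Real.exp h := by
    rw [Set.mem_Ico, and_comm, ← Real.exp_add, ← Real.lt_log_iff_exp_lt (hN i hi),
      ← Real.log_le_iff_le_exp (hN i hi), sub_neg, neg_le_sub_iff_le_add]
  simp [Set.indicator_apply, hmem]

end Logarithm

theorem integral_norm_sq_expSum_le {ι E : Type*} [NormedAddCommGroup E] [InnerProductSpace ℂ E]
    [CompleteSpace E] (l : ι → ℝ) {c : ι → E} (hc : Summable fun i => ‖c i‖) {T : ℝ}
    (hT : 0 < T) :
    ∫ t in -T..T, ‖expSum l c (t / (2 * Real.pi))‖ ^ 2 ≤ 8 * Real.pi * T ^ 2 *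
      ∫ u, ‖translateSum ((Set.Ico (-(1 / T)) 0).indicator 1) l c u‖ ^ 2 := by
  have hbox (p : ℝ≥0∞) : MemLp ((Set.Ico (-(1 / T)) 0).indicator (1 : ℝ → ℂ)) p :=
    memLp_indicator_const p measurableSet_Ico 1 (.inr measure_Ico_lt_top.ne)
  have hfourier : ∀ ξ ∈ Set.Ioc (-T / (2 * Real.pi)) (T / (2 * Real.pi)),
      1 / (2 * T) ≤ ‖𝓕 ((Set.Ico (-(1 / T)) 0).indicator (1 : ℝ → ℂ)) ξ‖ := by
    intro ξ hξ
    rw [Set.mem_Ioc, div_lt_iff₀' (by positivity), le_div_iff₀' (by positivity)] at hξ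
    exact inv_two_mul_le_norm_fourier_indicator_Ico hT (abs_le.2 ⟨hξ.1.le, hξ.2⟩)
  have hmain := sq_mul_setIntegral_norm_sq_expSum_le (memLp_one_iff_integrable.1 (hbox 1)) (hbox 2)
    l hc measurableSet_Ioc (by positivity) hfourier
  rw [intervalIntegral.integral_comp_div (fun ξ => ‖expSum l c ξ‖ ^ 2) (by positivity),
    intervalIntegral.integral_of_le (by gcongr; linarith), smul_eq_mul]
  calc 2 * Real.pi * ∫ ξ in Set.Ioc (-T / (2 * Real.pi)) (T / (2 * Real.pi)), ‖expSum l c ξ‖ ^ 2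
      = 8 * Real.pi * T ^ 2 * ((1 / (2 * T)) ^ 2 *
        ∫ ξ in Set.Ioc (-T / (2 * Real.pi)) (T / (2 * Real.pi)), ‖expSum l c ξ‖ ^ 2) := by
        field_simp
        ring
    _ ≤ _ := by gcongr

theorem gallagher_number_field_general {ι E : Type*} [NormedAddCommGroup E]
    [InnerProductSpace ℂ E] [CompleteSpace E] {N : ι → ℝ} {c : ι → E}
    (hN : ∀ i, c i ≠ 0 → 0 < N i) (hc : Summable fun i => ‖c i‖) {T : ℝ} (hT : 0 < T) :
    ∫ t in -T..T, ‖∑' i, (N i : ℂ) ^ (-(t : ℂ) * Complex.I) • c i‖ ^ 2 ≤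
      8 * Real.pi * T ^ 2 * ∫ x in Set.Ioi (0 : ℝ),
        ‖∑' i : {i // x < N i ∧ N i ≤ x * Real.exp (1 / T)}, c i‖ ^ 2 / x := by
  rw [integral_Ioi_div_eq_integral_comp_exp fun x =>
    ‖∑' i : {i // x < N i ∧ N i ≤ x * Real.exp (1 / T)}, c i‖ ^ 2]
  simpa only [expSum_log hN, translateSum_indicator_Ico_log hN] using
    integral_norm_sq_expSum_le (fun i => Real.log (N i)) hc hT

/-- A number-field generalization of Gallagher's lemma: there is an absolute constant `C > 0`
such that for every number field `F`, every real `T ≥ 1`, and every absolutely summable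
`c` on the ideals of `𝓞 F` vanishing on the zero ideal,
`∫_{-T}^{T} |∑_𝔫 c(𝔫) (N𝔫)^{-it}|² dt
  ≤ C T² ∫_0^∞ |∑_{x < N𝔫 ≤ x e^{1/T}} c(𝔫)|² dx/x`. -/
theorem gallagher_number_field :
    ∃ C : ℝ, 0 < C ∧
      ∀ (F : Type) [Field F] [NumberField F] (T : ℝ), 1 ≤ T →
        ∀ c : Ideal (𝓞 F) → ℂ, c 0 = 0 → Summable (fun I => ‖c I‖) →
          (∫ t in (-T)..T,
              ‖∑' I : Ideal (𝓞 F),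
                  c I * (Ideal.absNorm I : ℂ) ^ (-(t : ℂ) * Complex.I)‖ ^ 2) ≤
            C * T ^ 2 *
              ∫ x in Set.Ioi (0 : ℝ),
                ‖∑' I : {I : Ideal (𝓞 F) //
                    x < (Ideal.absNorm I : ℝ) ∧
                      (Ideal.absNorm I : ℝ) ≤ x * Real.exp (1 / T)}, c I.1‖ ^ 2 / x := by
  refine ⟨8 * Real.pi, by positivity, fun F _ _ T hT c hc₀ hc => ?_⟩
  have hN (I : Ideal (𝓞 F)) (hI : c I ≠ 0) : (0 : ℝ) < Ideal.absNorm I :=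
    Nat.cast_pos.2 (Nat.pos_of_ne_zero fun h => hI (Ideal.absNorm_eq_zero_iff.1 h ▸ hc₀))
  simpa [mul_comm (c _)] using gallagher_number_field_general hN hc (zero_lt_one.trans_le hT)
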